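/- Let n ≥ 1 be an integer and δ ∈ (0, q^{−1}]. Let (h_k)_{k≥1} be a sequence of polynomial vectors in 𝔽_q[z]ⁿ such that ‖h_{k+1}‖/‖h_k‖ ≥ q·δ^{−1} for all k ≥ 1 and ‖h_k‖^{1/k} → ∞ as k → ∞. Then the set S_δ = {θ ∈ 𝕀ⁿ : there exists k_0(θ) such that ⟨h_k·θ⟩ ≥ δ for all k ≥ k_0(θ)} has Hausdorff dimension n, where h_k·θ = h_{k1}θ_1 + ⋯ + h_{kn}θ_n. -/

import Mathlib

/-!
Common setup: the field `𝔽_q((z⁻¹))` of formal power series over a finite field `K` of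
cardinality `q`, modeled as the field `FF K` of formal Laurent series in `t = z⁻¹`,
together with its non-Archimedean norm, the embedding of the polynomial ring `𝔽_q[z]`,
distances to polynomial (vectors), Diophantine exponents, `Bad` sets, continued fractions
and best approximation sequences.
-/

open scoped Classical ENNReal NNReal
open Filter

noncomputable section

namespace FPSDA

variable (K : Type*) [Field K] [Fintype K]

/-- The field `𝔽_q((z⁻¹))` of formal power series in `z⁻¹` over the finite field `K = 𝔽_q`,
modeled as the field of formal Laurent series in the variable `t = z⁻¹`. -/
def FF : Type _ := LaurentSeries K

instance : Field (FF K) := inferInstanceAs (Field (LaurentSeries K))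

variable {K}

/-- The identity map, viewing an element of `𝔽_q((z⁻¹))` as a Laurent series in `t = z⁻¹`. -/
def toL (x : FF K) : LaurentSeries K := x

@[simp] lemma toL_zero : toL (0 : FF K) = 0 := rfl
@[simp] lemma toL_add (x y : FF K) : toL (x + y) = toL x + toL y := rfl
@[simp] lemma toL_neg (x : FF K) : toL (-x) = -toL x := rfl
@[simp] lemma toL_sub (x y : FF K) : toL (x - y) = toL x - toL y := rfl
lemma toL_eq_zero {x : FF K} : toL x = 0 ↔ x = 0 := Iff.rfl

/-- The norm `‖x‖ = q ^ (deg x)` on `𝔽_q((z⁻¹))`, where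
`deg x = - (order of x as a Laurent series in z⁻¹)`; `‖0‖ = 0`. -/
def fnorm (x : FF K) : ℝ :=
  if toL x = 0 then 0 else (Fintype.card K : ℝ) ^ (-(toL x).order)

lemma one_le_q : (1 : ℝ) ≤ (Fintype.card K : ℝ) := by
  exact_mod_cast Fintype.card_pos

lemma fnorm_nonneg (x : FF K) : 0 ≤ fnorm x := by
  unfold fnorm
  split_ifs
  · exact le_refl 0
  · exact zpow_nonneg (by positivity) _

lemma fnorm_eq_zero {x : FF K} : fnorm x = 0 ↔ x = 0 := by
  unfold fnorm
  split_ifs with h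
  · exact ⟨fun _ => toL_eq_zero.mp h, fun _ => rfl⟩
  · constructor
    · intro hc
      exact absurd hc (zpow_ne_zero _ (by
        have h0 : (0:ℝ) < (Fintype.card K : ℝ) := by positivity
        exact ne_of_gt h0))
    · intro hc
      exact absurd (toL_eq_zero.mpr hc) h

lemma fnorm_neg (x : FF K) : fnorm (-x) = fnorm x := by
  unfold fnorm
  rw [toL_neg]
  simp [neg_eq_zero, HahnSeries.order_neg]

lemma fnorm_add_le (x y : FF K) : fnorm (x + y) ≤ max (fnorm x) (fnorm y) := by
  by_cases hxy : x + y = 0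
  · rw [fnorm_eq_zero.mpr hxy]
    exact le_max_of_le_left (fnorm_nonneg x)
  by_cases hx : x = 0
  · rw [hx, zero_add]
    exact le_max_right _ _
  by_cases hy : y = 0
  · rw [hy, add_zero]
    exact le_max_left _ _
  have horder : min (toL x).order (toL y).order ≤ (toL (x + y)).order := by
    rw [toL_add]
    exact HahnSeries.min_order_le_order_add (show toL x + toL y ≠ 0 from hxy)
  have h1 : fnorm (x + y) = (Fintype.card K : ℝ) ^ (-(toL (x+y)).order) := by
    unfold fnorm
    rw [if_neg (show toL (x + y) ≠ 0 from hxy)]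
  rcases le_total (toL x).order (toL y).order with h | h
  · have h2 : (toL x).order ≤ (toL (x+y)).order := le_trans (by simp [min_eq_left h]) horder
    refine le_max_of_le_left ?_
    rw [h1]
    unfold fnorm
    rw [if_neg (show toL x ≠ 0 from hx)]
    exact zpow_le_zpow_right₀ one_le_q (by omega)
  · have h2 : (toL y).order ≤ (toL (x+y)).order := le_trans (by simp [min_eq_right h]) horder
    refine le_max_of_le_right ?_
    rw [h1]
    unfold fnorm
    rw [if_neg (show toL y ≠ 0 from hy)]
    exact zpow_le_zpow_right₀ one_le_q (by omega)

/-- The (ultra)metric `dist x y = ‖x - y‖` on `𝔽_q((z⁻¹))`. -/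
instance : MetricSpace (FF K) where
  dist x y := fnorm (x - y)
  dist_self x := by
    show fnorm (x - x) = 0
    rw [sub_self]
    exact fnorm_eq_zero.mpr rfl
  dist_comm x y := by
    show fnorm (x - y) = fnorm (y - x)
    have h : x - y = -(y - x) := by ring
    rw [h, fnorm_neg]
  dist_triangle x y z := by
    show fnorm (x - z) ≤ fnorm (x - y) + fnorm (y - z)
    have h : x - z = (x - y) + (y - z) := by ring
    calc fnorm (x - z) ≤ max (fnorm (x - y)) (fnorm (y - z)) := by
          rw [h]; exact fnorm_add_le _ _
      _ ≤ fnorm (x - y) + fnorm (y - z) :=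
        max_le (le_add_of_nonneg_right (fnorm_nonneg _)) (le_add_of_nonneg_left (fnorm_nonneg _))
  eq_of_dist_eq_zero := by
    intro x y h
    have h' : x - y = 0 := fnorm_eq_zero.mp h
    exact sub_eq_zero.mp h'

instance : MeasurableSpace (FF K) := borel _
instance : BorelSpace (FF K) := ⟨rfl⟩

/-- The canonical embedding of the polynomial ring `𝔽_q[z]` into `𝔽_q((z⁻¹))`:
the variable `z` is sent to `t⁻¹ = single (-1) 1`. -/
def polyF (P : Polynomial K) : FF K :=
  Polynomial.aeval (HahnSeries.single (-1 : ℤ) (1 : K)) P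

/-- Supremum norm of a vector with entries in `𝔽_q((z⁻¹))`. -/
def vnorm {ι : Type*} [Fintype ι] (v : ι → FF K) : ℝ := ⨆ i, fnorm (v i)

/-- `⟨v⟩`, the distance from the vector `v` to the nearest polynomial vector. -/
def vdist {ι : Type*} [Fintype ι] (v : ι → FF K) : ℝ :=
  ⨅ y : ι → Polynomial K, vnorm (fun i => v i - polyF (y i))

/-- `⟨x⟩`, the distance from the scalar `x` to the nearest polynomial. -/
def sdist (x : FF K) : ℝ := ⨅ y : Polynomial K, fnorm (x - polyF y)

/-- The fractional part `{x} = Σ_{i ≥ 1} a_i z^{-i}` of `x = Σ_i a_i z^{-i}`. -/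
def fracPart (x : FF K) : FF K :=
  (⟨fun i => if 1 ≤ i then (toL x).coeff i else 0, (toL x).isPWO_support'.mono (by
      intro i hi
      by_cases h : (1:ℤ) ≤ i
      · simpa [Function.mem_support, h] using hi
      · simp [Function.mem_support, h] at hi)⟩ : LaurentSeries K)

/-- The integer part `[x] = Σ_{i ≤ 0} a_i z^{-i}` of `x = Σ_i a_i z^{-i}`, as a polynomial
in `z`. -/
def intPoly (x : FF K) : Polynomial K :=
  ∑ i ∈ Finset.range ((-(toL x).order).toNat + 1),
    Polynomial.monomial i ((toL x).coeff (-(i : ℤ)))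

/-- `x ∈ 𝔽_q((z⁻¹))` is irrational if it is not in `𝔽_q(z)`, i.e. is not a ratio of two
polynomials in `z`. -/
def FIrrational (x : FF K) : Prop :=
  ∀ P Q : Polynomial K, Q ≠ 0 → x * polyF Q ≠ polyF P

section Exponents

variable {m n : ℕ}

/-- The norm `‖x‖ = max_j ‖x_j‖` of a polynomial vector `x`. -/
def pnorm {ι : Type*} [Fintype ι] (x : ι → Polynomial K) : ℝ :=
  vnorm (fun i => (polyF (x i) : FF K))

/-- The system `⟨A x - θ⟩ ≤ H^{-ω}`, `‖x‖ ≤ H` has a polynomial solution `x`. -/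
def Solv (A : Matrix (Fin n) (Fin m) (FF K)) (θ : Fin n → FF K) (ω H : ℝ) : Prop :=
  ∃ x : Fin m → Polynomial K,
    vdist (A.mulVec (fun j => polyF (x j)) - θ) ≤ H ^ (-ω) ∧ pnorm x ≤ H

/-- The system `⟨A x⟩ ≤ H^{-ω}`, `‖x‖ ≤ H` has a nonzero polynomial solution `x`. -/
def SolvHom (A : Matrix (Fin n) (Fin m) (FF K)) (ω H : ℝ) : Prop :=
  ∃ x : Fin m → Polynomial K, x ≠ 0 ∧
    vdist (A.mulVec (fun j => polyF (x j))) ≤ H ^ (-ω) ∧ pnorm x ≤ H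

/-- The inhomogeneous exponent `ω(A, θ)`: the supremum (in `[0,∞]`) of all `ω` such that
for arbitrarily large `H` the system `⟨A x - θ⟩ ≤ H^{-ω}`, `‖x‖ ≤ H` has a polynomial
solution. -/
def omegaInhom (A : Matrix (Fin n) (Fin m) (FF K)) (θ : Fin n → FF K) : ℝ≥0∞ :=
  ⨆ (ω : ℝ) (_ : ∀ H₀ : ℝ, ∃ H : ℝ, H₀ ≤ H ∧ Solv A θ ω H), ENNReal.ofReal ω

/-- The uniform inhomogeneous exponent `ω̂(A, θ)`: as `ω(A, θ)`, but with a solution for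
all sufficiently large `H`. -/
def omegaHatInhom (A : Matrix (Fin n) (Fin m) (FF K)) (θ : Fin n → FF K) : ℝ≥0∞ :=
  ⨆ (ω : ℝ) (_ : ∃ H₀ : ℝ, ∀ H : ℝ, H₀ ≤ H → Solv A θ ω H), ENNReal.ofReal ω

/-- The homogeneous exponent `ω(A)`. -/
def omegaHom (A : Matrix (Fin n) (Fin m) (FF K)) : ℝ≥0∞ :=
  ⨆ (ω : ℝ) (_ : ∀ H₀ : ℝ, ∃ H : ℝ, H₀ ≤ H ∧ SolvHom A ω H), ENNReal.ofReal ω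

/-- The uniform homogeneous exponent `ω̂(A)`. -/
def omegaHatHom (A : Matrix (Fin n) (Fin m) (FF K)) : ℝ≥0∞ :=
  ⨆ (ω : ℝ) (_ : ∃ H₀ : ℝ, ∀ H : ℝ, H₀ ≤ H → SolvHom A ω H), ENNReal.ofReal ω

/-- `A` is non-degenerate: the `𝔽_q[z]`-module `Aᵀ 𝔽_q[z]ⁿ + 𝔽_q[z]^m ⊆ 𝔽_q((z⁻¹))^m` has
rank `m + n` over `𝔽_q[z]`, i.e. its `m + n` natural generators are linearly independent
over `𝔽_q[z]`; equivalently, no nonzero polynomial vector `u` makes `Aᵀ u` a polynomial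
vector. -/
def Nondegenerate (A : Matrix (Fin n) (Fin m) (FF K)) : Prop :=
  ∀ u : Fin n → Polynomial K,
    (∃ v : Fin m → Polynomial K,
      A.transpose.mulVec (fun i => polyF (u i)) = fun j => polyF (v j)) → u = 0

/-- `liminf_{x ∈ 𝔽_q[z]^m, ‖x‖ → ∞} ‖x‖^{m/n} ⟨A x - θ⟩`, computed in `[0, ∞]`. -/
def badLiminf (A : Matrix (Fin n) (Fin m) (FF K)) (θ : Fin n → FF K) : ℝ≥0∞ :=
  Filter.liminf
    (fun x : Fin m → Polynomial K =>
      ENNReal.ofReal ((pnorm x) ^ ((m : ℝ) / (n : ℝ)) *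
        vdist (A.mulVec (fun j => polyF (x j)) - θ)))
    (Filter.comap (fun x : Fin m → Polynomial K => pnorm x) Filter.atTop)

/-- The set `Bad^ε(A)` of `θ` in the unit polydisc `𝕀ⁿ` with
`liminf_{‖x‖ → ∞} ‖x‖^{m/n} ⟨A x - θ⟩ ≥ ε`. -/
def Bad (A : Matrix (Fin n) (Fin m) (FF K)) (ε : ℝ) : Set (Fin n → FF K) :=
  {θ | (∀ i, fnorm (θ i) < 1) ∧ ENNReal.ofReal ε ≤ badLiminf A θ}

/-- The set `Bad(A) = ⋃_{ε > 0} Bad^ε(A)`. -/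
def BadAll (A : Matrix (Fin n) (Fin m) (FF K)) : Set (Fin n → FF K) :=
  ⋃ (ε : ℝ) (_ : 0 < ε), Bad A ε

/-- `M(y) = ⟨Aᵀ y⟩` for a polynomial vector `y`. -/
def Mfun (A : Matrix (Fin n) (Fin m) (FF K)) (y : Fin n → Polynomial K) : ℝ :=
  vdist (A.transpose.mulVec (fun i => polyF (y i)))

/-- `y 1, y 2, …` is a sequence of best approximations related to `Aᵀ`:
`1 = Y_1 < Y_2 < ⋯`, `M_1 > M_2 > ⋯`, and `M(x) ≥ M_k` for every nonzero polynomial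
vector `x` with `‖x‖ < Y_{k+1}` (the value `y 0` is irrelevant). -/
def IsBestApproxSeq (A : Matrix (Fin n) (Fin m) (FF K))
    (y : ℕ → Fin n → Polynomial K) : Prop :=
  pnorm (y 1) = 1 ∧
  (∀ k, 1 ≤ k → pnorm (y k) < pnorm (y (k + 1))) ∧
  (∀ k, 1 ≤ k → Mfun A (y (k + 1)) < Mfun A (y k)) ∧
  (∀ k, 1 ≤ k → ∀ x : Fin n → Polynomial K, x ≠ 0 → pnorm x < pnorm (y (k + 1)) →
    Mfun A (y k) ≤ Mfun A x)

end Exponents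

section Scalar

/-- The system `⟨ξ x - θ⟩ ≤ H^{-ω}`, `‖x‖ ≤ H` has a polynomial solution `x`. -/
def sSolv (ξ θ : FF K) (ω H : ℝ) : Prop :=
  ∃ x : Polynomial K, sdist (ξ * polyF x - θ) ≤ H ^ (-ω) ∧ fnorm (polyF x) ≤ H

/-- The scalar inhomogeneous exponent `ω((ξ), θ)`. -/
def somegaInhom (ξ θ : FF K) : ℝ≥0∞ :=
  ⨆ (ω : ℝ) (_ : ∀ H₀ : ℝ, ∃ H : ℝ, H₀ ≤ H ∧ sSolv ξ θ ω H), ENNReal.ofReal ω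

/-- The scalar uniform inhomogeneous exponent `ω̂((ξ), θ)`. -/
def somegaHatInhom (ξ θ : FF K) : ℝ≥0∞ :=
  ⨆ (ω : ℝ) (_ : ∃ H₀ : ℝ, ∀ H : ℝ, H₀ ≤ H → sSolv ξ θ ω H), ENNReal.ofReal ω

/-- The scalar homogeneous exponent `ω((ξ))`. -/
def somegaHom (ξ : FF K) : ℝ≥0∞ :=
  ⨆ (ω : ℝ) (_ : ∀ H₀ : ℝ, ∃ H : ℝ, H₀ ≤ H ∧ ∃ x : Polynomial K, x ≠ 0 ∧
      sdist (ξ * polyF x) ≤ H ^ (-ω) ∧ fnorm (polyF x) ≤ H), ENNReal.ofReal ω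

/-- `liminf_{x ∈ 𝔽_q[z], ‖x‖ → ∞} ‖x‖ ⟨α x - θ⟩`, computed in `[0, ∞]`. -/
def sBadLiminf (α θ : FF K) : ℝ≥0∞ :=
  Filter.liminf
    (fun x : Polynomial K => ENNReal.ofReal (fnorm (polyF x) * sdist (α * polyF x - θ)))
    (Filter.comap (fun x : Polynomial K => fnorm (polyF x)) Filter.atTop)

/-- The set `Bad^ε(α)` of `θ ∈ 𝕀` with `liminf_{‖x‖ → ∞} ‖x‖ ⟨α x - θ⟩ ≥ ε`. -/
def sBad (α : FF K) (ε : ℝ) : Set (FF K) :=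
  {θ | fnorm θ < 1 ∧ ENNReal.ofReal ε ≤ sBadLiminf α θ}

end Scalar

section CF

/-- The Gauss map `T x = 1/x - [1/x]` on `𝔽_q((z⁻¹))`. -/
def gaussMap (x : FF K) : FF K := fracPart x⁻¹

/-- `pquot α k` is the `(k+1)`-st partial quotient `A_{k+1} = [1 / T^k α]` of the
continued fraction expansion of `α`. -/
def pquot (α : FF K) (k : ℕ) : Polynomial K := intPoly ((gaussMap^[k] α)⁻¹)

/-- `cfQ α k` is the denominator `Q_k` of the `k`-th convergent of the continued fraction
expansion of `α`: `Q_0 = 1`, `Q_1 = A_1`, `Q_{k+2} = A_{k+2} Q_{k+1} + Q_k`. -/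
def cfQ (α : FF K) : ℕ → Polynomial K
  | 0 => 1
  | 1 => pquot α 0
  | (k + 2) => pquot α (k + 1) * cfQ α (k + 1) + cfQ α k

/-- `α` is singular on average: for every `c > 0` the proportion of `l ∈ {1, …, N}` for
which `‖{Q α}‖ ≤ c 2^{-l}` has a solution `Q ∈ 𝔽_q[z]` with `0 < ‖Q‖ ≤ 2^l` tends to `1`
as `N → ∞`. -/
def SingularOnAverage (α : FF K) : Prop :=
  ∀ c : ℝ, 0 < c →
    Filter.Tendsto
      (fun N : ℕ =>
        (((Finset.Icc 1 N).filter (fun l : ℕ =>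
            ∃ Q : Polynomial K, Q ≠ 0 ∧ fnorm (polyF Q) ≤ 2 ^ l ∧
              fnorm (fracPart (polyF Q * α)) ≤ c / 2 ^ l)).card : ℝ) / (N : ℝ))
      Filter.atTop (nhds 1)

end CF

end FPSDA

open FPSDA MeasureTheory

/-!
If the coefficient of `z⁻¹` in `x` is nonzero, then `⟨x⟩ ≥ q⁻¹`. For `x = h ⋅ θ` this coefficient
is a linear form in the digits of `θ` whose last nonzero block of coefficients sits at the position
`deg h`. When the degrees of the `h_k` are pairwise distinct, the digits of `θ` at all the other
positions can therefore be prescribed freely, the condition at `h_k` being met by an appropriate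
choice of the digits at the position `deg h_k`. The growth condition says that `deg h_k / k → ∞`, so
the free positions have density one: reading the free digits as base `q` expansions maps the set
onto a cube, and this map is Hölder of every exponent `r < 1`.
-/

section Counting

lemma exists_le_count_notMem_image {D : ℕ → ℕ} {M : ℕ} (hM : 0 < M)
    (hD : ∀ᶠ k in atTop, M * k ≤ D k) (T : Set ℕ) :
    ∃ C, ∀ N, N ≤ Nat.count (· ∉ D '' T) N + (N / M + C) := by
  obtain ⟨k₀, hk₀⟩ := eventually_atTop.1 hD
  refine ⟨k₀ + 1, fun N => ?_⟩
  have hsub : Finset.range N ⊆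
      {s ∈ Finset.range N | s ∉ D '' T} ∪ (Finset.range (N / M + (k₀ + 1))).image D := by
    intro s hs
    by_cases hsD : s ∈ D '' T
    · obtain ⟨k, -, rfl⟩ := hsD
      refine Finset.mem_union_right _ (Finset.mem_image_of_mem D (Finset.mem_range.2 ?_))
      rcases lt_or_ge k k₀ with hk | hk
      · exact (hk.trans k₀.lt_succ_self).trans_le (Nat.le_add_left _ _)
      · have hkM : k ≤ N / M := (Nat.le_div_iff_mul_le hM).2 <| by
          rw [mul_comm]
          exact (hk₀ k hk).trans (Finset.mem_range.1 hs).le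
        exact hkM.trans_lt (Nat.lt_add_of_pos_right k₀.succ_pos)
    · exact Finset.mem_union_left _ (Finset.mem_filter.2 ⟨hs, hsD⟩)
  calc N = (Finset.range N).card := (Finset.card_range N).symm
    _ ≤ _ := (Finset.card_le_card hsub).trans (Finset.card_union_le _ _)
    _ ≤ _ := by
      rw [Nat.count_eq_card_filter_range]
      gcongr
      exact Finset.card_image_le.trans (Finset.card_range _).le

lemma exists_mul_le_count_notMem_image {D : ℕ → ℕ} (hD : ∀ M, ∀ᶠ k in atTop, M * k ≤ D k)
    (T : Set ℕ) {r : ℝ} (hr : r < 1) :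
    ∃ C : ℕ, ∀ N : ℕ, r * N ≤ Nat.count (· ∉ D '' T) N + C := by
  obtain ⟨M, hM⟩ := exists_nat_one_div_lt (sub_pos.2 hr)
  obtain ⟨C, hC⟩ := exists_le_count_notMem_image M.succ_pos (hD (M + 1)) T
  refine ⟨C, fun N => ?_⟩
  have hdiv : ((N / (M + 1) : ℕ) : ℝ) ≤ (1 - r) * N :=
    calc ((N / (M + 1) : ℕ) : ℝ) ≤ N / ((M + 1 : ℕ) : ℝ) := Nat.cast_div_le
      _ = 1 / ((M : ℝ) + 1) * N := by push_cast; ring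
      _ ≤ (1 - r) * N := by gcongr
  have hcount : (N : ℝ) ≤ Nat.count (· ∉ D '' T) N + ((N / (M + 1) : ℕ) + C) := by
    exact_mod_cast hC N
  linarith

lemma infinite_of_mul_le_count {p : ℕ → Prop} [DecidablePred p] {r : ℝ} (hr : 0 < r) {C : ℕ}
    (hp : ∀ N : ℕ, r * N ≤ Nat.count p N + C) : (Set.ofPred p).Infinite := by
  intro hfin
  obtain ⟨N, hN⟩ := exists_nat_gt ((hfin.toFinset.card + C) / r)
  have hlt : (hfin.toFinset.card + C : ℝ) < r * N := by
    rwa [div_lt_iff₀' hr] at hN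
  have hcard : (Nat.count p N : ℝ) ≤ hfin.toFinset.card := by
    exact_mod_cast Nat.count_le_card hfin N
  linarith [hp N]

end Counting

section RealSequences

lemma eventually_pow_le_of_tendsto_rpow_one_div {a : ℕ → ℝ} (ha : ∀ k, 0 ≤ a k)
    (h : Tendsto (fun k : ℕ => a k ^ (1 / (k : ℝ))) atTop atTop) {b : ℝ} (hb : 0 ≤ b) :
    ∀ᶠ k in atTop, b ^ k ≤ a k := by
  filter_upwards [h.eventually_ge_atTop b, eventually_ne_atTop 0] with k hk hk0
  calc b ^ k ≤ (a k ^ (1 / (k : ℝ))) ^ k := pow_le_pow_left₀ hb hk k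
    _ = a k := by rw [one_div, Real.rpow_inv_natCast_pow (ha k) hk0]

lemma strictMonoOn_Ici_of_mul_le_succ {a : ℕ → ℝ} {c : ℝ} (hc : 1 < c) {k₀ : ℕ}
    (hpos : ∀ k, k₀ ≤ k → 0 < a k) (h : ∀ k, k₀ ≤ k → c * a k ≤ a (k + 1)) :
    StrictMonoOn a (Set.Ici k₀) :=
  strictMonoOn_of_lt_add_one Set.ordConnected_Ici fun k _ hk _ =>
    (lt_mul_of_one_lt_left (hpos k hk) hc).trans_le (h k hk)

end RealSequences

section TriangularSystems

lemma exists_forall_of_forall_exists_update {α : Type*} [Nonempty α] {P : ℕ → (ℕ → α) → Prop}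
    (hP : ∀ s u u', (∀ t ≤ s, u t = u' t) → P s u → P s u')
    (hstep : ∀ s u, ∃ a, P s (Function.update u s a)) : ∃ u, ∀ s, P s u := by
  choose a ha using hstep
  let U : ℕ → ℕ → α :=
    Nat.rec (fun _ => Classical.arbitrary α) fun s u => Function.update u s (a s u)
  have hU : ∀ t N, t + 1 ≤ N → U N t = U (t + 1) t := fun t N hN => by
    induction N, hN using Nat.le_induction with
    | base => rfl
    | succ N hN ih => exact (Function.update_of_ne (by omega) _ _).trans ih
  exact ⟨fun t => U (t + 1) t, fun s =>
    hP s (U (s + 1)) _ (fun t ht => hU t (s + 1) (by omega)) (ha s (U s))⟩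

variable {K ι : Type*} [Field K] [Fintype ι]

lemma exists_dotProduct_eq {w : ι → K} (hw : w ≠ 0) (b : K) : ∃ a, w ⬝ᵥ a = b := by
  obtain ⟨i, hi⟩ := Function.ne_iff.1 hw
  exact ⟨Pi.single i (b / w i), by rw [dotProduct_single, mul_div_cancel₀ _ hi]⟩

lemma exists_triangular_solution {κ : Type*} {T : Set κ} {w : κ → ℕ → ι → K} {D : κ → ℕ}
    (hD : Set.InjOn D T) (hw : ∀ k ∈ T, w k (D k) ≠ 0) (b : κ → K) (c : ℕ → ι → K) :
    ∃ u : ℕ → ι → K, (∀ k ∈ T, ∑ m ∈ Finset.range (D k + 1), w k m ⬝ᵥ u m = b k) ∧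
      ∀ s ∉ D '' T, u s = c s := by
  let P : ℕ → (ℕ → ι → K) → Prop := fun s u =>
    (∀ k ∈ T, D k = s → ∑ m ∈ Finset.range (s + 1), w k m ⬝ᵥ u m = b k) ∧
      (s ∉ D '' T → u s = c s)
  have hlocal : ∀ s u u', (∀ t ≤ s, u t = u' t) → P s u → P s u' := by
    rintro s u u' huu' ⟨hsum, hfree⟩
    refine ⟨fun k hk hks => ?_, fun hs => (huu' s le_rfl).symm.trans (hfree hs)⟩
    rw [← hsum k hk hks]
    refine Finset.sum_congr rfl fun m hm => ?_
    rw [huu' m (Nat.le_of_lt_succ (Finset.mem_range.1 hm))]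
  have hstep : ∀ s u, ∃ a, P s (Function.update u s a) := by
    intro s u
    by_cases hs : s ∈ D '' T
    · obtain ⟨k, hk, rfl⟩ := hs
      obtain ⟨a, ha⟩ := exists_dotProduct_eq (hw k hk)
        (b k - ∑ m ∈ Finset.range (D k), w k m ⬝ᵥ u m)
      refine ⟨a, fun k' hk' hkk' => ?_, fun hs => absurd ⟨k, hk, rfl⟩ hs⟩
      obtain rfl := hD hk' hk hkk'
      have hbelow : ∀ m ∈ Finset.range (D k'), w k' m ⬝ᵥ Function.update u (D k') a m =
          w k' m ⬝ᵥ u m := fun m hm => by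
        rw [Function.update_of_ne (Finset.mem_range.1 hm).ne]
      rw [Finset.sum_range_succ, Finset.sum_congr rfl hbelow, Function.update_self, ha,
        add_sub_cancel]
    · exact ⟨c s, fun k hk hks => absurd ⟨k, hk, hks⟩ hs, fun _ => Function.update_self ..⟩
  obtain ⟨u, hu⟩ := exists_forall_of_forall_exists_update hlocal hstep
  exact ⟨u, fun k hk => (hu (D k)).1 k hk rfl, fun s hs => (hu s).2 hs⟩

end TriangularSystems

section HausdorffDimension

lemma dimH_le_of_forall_cover {X : Type*} [EMetricSpace X] {s : Set X} {d : ℝ≥0}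
    {r : ℕ → ℝ≥0∞} (hr : Tendsto r atTop (nhds 0)) {ι : ℕ → Type*} [∀ N, Fintype (ι N)]
    {t : ∀ N, ι N → Set X} (hdiam : ∀ N i, Metric.ediam (t N i) ≤ r N)
    (hcover : ∀ N, s ⊆ ⋃ i, t N i) {C : ℝ≥0}
    (hcard : ∀ N, Fintype.card (ι N) * r N ^ (d : ℝ) ≤ C) : dimH s ≤ d := by
  borelize X
  have hsum : ∀ N, ∑ i, Metric.ediam (t N i) ^ (d : ℝ) ≤ C := fun N =>
    calc ∑ i, Metric.ediam (t N i) ^ (d : ℝ) ≤ ∑ _i : ι N, r N ^ (d : ℝ) := by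
          gcongr with i
          exact hdiam N i
      _ = Fintype.card (ι N) * r N ^ (d : ℝ) := by simp
      _ ≤ C := hcard N
  have hmeasure : μH[d] s ≤ C :=
    calc μH[d] s ≤ liminf (fun N => ∑ i, Metric.ediam (t N i) ^ (d : ℝ)) atTop :=
          Measure.hausdorffMeasure_le_liminf_sum d s r hr t (.of_forall hdiam) (.of_forall hcover)
      _ ≤ liminf (fun _ => (C : ℝ≥0∞)) atTop := liminf_le_liminf (.of_forall hsum)
      _ = C := liminf_const _
  exact dimH_le_of_hausdorffMeasure_ne_top (ne_top_of_le_ne_top ENNReal.coe_ne_top hmeasure)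

lemma dimH_Icc_pi (ι : Type*) [Fintype ι] {a b : ι → ℝ} (hab : ∀ i, a i < b i) :
    dimH (Set.Icc a b) = Fintype.card ι := by
  choose m ham hmb using fun i => exists_between (hab i)
  rw [Real.dimH_of_mem_nhds (pi_Icc_mem_nhds ham hmb), Module.finrank_pi]

lemma holderOnWith_of_dist_le {X Y : Type*} [PseudoMetricSpace X] [PseudoMetricSpace Y]
    {C r : ℝ≥0} {f : X → Y} {s : Set X}
    (h : ∀ x ∈ s, ∀ y ∈ s, dist (f x) (f y) ≤ C * dist x y ^ (r : ℝ)) :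
    HolderOnWith C r f s := fun x hx y hy => by
  rw [edist_nndist, edist_nndist, ← ENNReal.coe_rpow_of_nonneg _ r.coe_nonneg, ← ENNReal.coe_mul,
    ENNReal.coe_le_coe]
  exact_mod_cast h x hx y hy

end HausdorffDimension

namespace FPSDA

variable {K : Type*} [Field K]

section Digits

open Polynomial

/-- The digit of `x` at the position `m`, i.e. the coefficient of `z^{-(m+1)}`; thus the positions
start at `0`, and an element of the unit ball is determined by its digits. -/
def digit (x : FF K) (m : ℕ) : K := (toL x).coeff ((m : ℤ) + 1)

/-- The element `∑ₘ uₘ z^{-(m+1)}` of the unit ball with digits `u`. -/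
def ofDigits (u : ℕ → K) : FF K :=
  HahnSeries.ofPowerSeries ℤ K (PowerSeries.X * PowerSeries.mk u)

lemma digit_ofDigits (u : ℕ → K) (m : ℕ) : digit (ofDigits u) m = u m := by
  have hcoeff := LaurentSeries.coeff_coe_powerSeries (PowerSeries.X * PowerSeries.mk u) (m + 1)
  rw [PowerSeries.coeff_succ_X_mul, PowerSeries.coeff_mk] at hcoeff
  exact_mod_cast hcoeff

lemma toL_polyF (P : K[X]) {N : ℕ} (hN : P.natDegree < N) :
    toL (polyF P) = ∑ m ∈ Finset.range N, HahnSeries.single (-(m : ℤ)) (P.coeff m) := by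
  refine (aeval_eq_sum_range' hN _).trans (Finset.sum_congr rfl fun m _ => ?_)
  rw [HahnSeries.single_pow, Algebra.smul_def, HahnSeries.algebraMap_apply',
    PowerSeries.algebraMap_apply, Algebra.algebraMap_self, RingHom.id_apply,
    HahnSeries.ofPowerSeries_C, HahnSeries.C_apply, HahnSeries.single_mul_single]
  simp

lemma coeff_polyF (P : K[X]) (i : ℤ) :
    (toL (polyF P)).coeff i = if i ≤ 0 then P.coeff (-i).toNat else 0 := by
  rw [toL_polyF P (N := P.natDegree + (-i).toNat + 1) (by omega), HahnSeries.coeff_sum]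
  split_ifs with hi
  · rw [Finset.sum_eq_single_of_mem (-i).toNat (by simp)]
    · rw [Int.toNat_of_nonneg (by omega), neg_neg, HahnSeries.coeff_single_same]
    · exact fun m _ hm => HahnSeries.coeff_single_of_ne (by omega)
  · exact Finset.sum_eq_zero fun m _ => HahnSeries.coeff_single_of_ne (by omega)

lemma digit_zero_polyF_mul {P : K[X]} (x : FF K) {N : ℕ} (hN : P.natDegree < N) :
    digit (polyF P * x) 0 = ∑ m ∈ Finset.range N, P.coeff m * digit x m := by
  have hmul : toL (polyF P * x) = toL (polyF P) * toL x := rfl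
  rw [digit, hmul, toL_polyF P hN, Finset.sum_mul, HahnSeries.coeff_sum]
  refine Finset.sum_congr rfl fun m _ => ?_
  rw [HahnSeries.coeff_single_mul, digit]
  congr 2
  push_cast
  ring

variable {ι : Type*} [Fintype ι]

/-- The degree of a polynomial vector, i.e. the largest degree of an entry; it is `0` for the zero
vector. -/
def vdegree (v : ι → K[X]) : ℕ := Finset.univ.sup fun i => (v i).natDegree

lemma natDegree_le_vdegree (v : ι → K[X]) (i : ι) : (v i).natDegree ≤ vdegree v :=
  Finset.le_sup (f := fun i => (v i).natDegree) (Finset.mem_univ i)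

lemma exists_coeff_vdegree_ne_zero {v : ι → K[X]} (hv : v ≠ 0) :
    ∃ i, (v i).coeff (vdegree v) ≠ 0 := by
  obtain ⟨i₀, hi₀⟩ := Function.ne_iff.1 hv
  obtain ⟨i, -, hmax⟩ := Finset.exists_max_image Finset.univ (fun i => (v i).degree)
    ⟨i₀, Finset.mem_univ i₀⟩
  have hi : v i ≠ 0 := fun h => hi₀ <| by simpa [h] using hmax i₀ (Finset.mem_univ i₀)
  have hdeg : vdegree v = (v i).natDegree := (natDegree_le_vdegree v i).antisymm' <|
    Finset.sup_le fun j hj => natDegree_le_natDegree (hmax j hj)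
  exact ⟨i, hdeg ▸ leadingCoeff_ne_zero.2 hi⟩

lemma digit_zero_sum_polyF_mul (v : ι → K[X]) (θ : ι → FF K) :
    digit (∑ i, polyF (v i) * θ i) 0 =
      ∑ m ∈ Finset.range (vdegree v + 1),
        (fun i => (v i).coeff m) ⬝ᵥ fun i => digit (θ i) m := by
  have hsum : digit (∑ i, polyF (v i) * θ i) 0 = ∑ i, digit (polyF (v i) * θ i) 0 :=
    HahnSeries.coeff_sum _
  simp only [hsum, dotProduct]
  rw [Finset.sum_comm]
  exact Finset.sum_congr rfl fun i _ =>
    digit_zero_polyF_mul _ (Nat.lt_succ_of_le (natDegree_le_vdegree v i))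

end Digits

variable [Fintype K]

section Norm

lemma one_lt_card_real : (1 : ℝ) < Fintype.card K := by
  exact_mod_cast Fintype.one_lt_card

lemma fnorm_le_zpow {x : FF K} {N : ℤ} (h : ∀ i < N, (toL x).coeff i = 0) :
    fnorm x ≤ (Fintype.card K : ℝ) ^ (-N) := by
  unfold fnorm
  split_ifs with hx
  · positivity
  · exact zpow_le_zpow_right₀ one_le_q (neg_le_neg ((HahnSeries.le_order_iff_forall hx).2 h))

lemma zpow_le_fnorm {x : FF K} {i : ℤ} (h : (toL x).coeff i ≠ 0) :
    (Fintype.card K : ℝ) ^ (-i) ≤ fnorm x := by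
  rw [fnorm, if_neg (HahnSeries.ne_zero_of_coeff_ne_zero h)]
  exact zpow_le_zpow_right₀ one_le_q (neg_le_neg (HahnSeries.order_le_of_coeff_ne_zero h))

end Norm

section UnitBall

variable (K) in
/-- The open unit ball `𝕀` of `𝔽_q((z⁻¹))`. -/
def unitBall : Set (FF K) := {x | fnorm x < 1}

lemma mem_unitBall_iff {x : FF K} : x ∈ unitBall K ↔ ∀ i ≤ 0, (toL x).coeff i = 0 := by
  constructor
  · intro hx i hi
    by_contra hne
    have hone : 1 ≤ (Fintype.card K : ℝ) ^ (-i) := one_le_zpow₀ one_le_q (by omega)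
    exact (hone.trans (zpow_le_fnorm hne)).not_gt hx
  · intro h
    calc fnorm x ≤ (Fintype.card K : ℝ) ^ (-1 : ℤ) := fnorm_le_zpow fun i hi => h i (by omega)
      _ < 1 := zpow_lt_one_of_neg₀ one_lt_card_real (by norm_num)

lemma coeff_sub_eq_zero_of_digit_eq {x y : FF K} (hx : x ∈ unitBall K) (hy : y ∈ unitBall K)
    {N : ℕ} (hxy : ∀ m < N, digit x m = digit y m) {i : ℤ} (hi : i < N + 1) :
    (toL (x - y)).coeff i = 0 := by
  rw [toL_sub, HahnSeries.coeff_sub, sub_eq_zero]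
  rcases le_or_gt i 0 with hi0 | hi0
  · rw [mem_unitBall_iff.1 hx i hi0, mem_unitBall_iff.1 hy i hi0]
  · obtain ⟨m, rfl⟩ : ∃ m : ℕ, i = m + 1 := ⟨(i - 1).toNat, by omega⟩
    exact hxy m (by omega)

lemma dist_le_of_digit_eq {x y : FF K} (hx : x ∈ unitBall K) (hy : y ∈ unitBall K)
    {N : ℕ} (hxy : ∀ m < N, digit x m = digit y m) :
    dist x y ≤ ((Fintype.card K : ℝ) ^ (N + 1))⁻¹ := by
  rw [← zpow_natCast, ← zpow_neg]
  exact fnorm_le_zpow fun i hi => coeff_sub_eq_zero_of_digit_eq hx hy hxy (by exact_mod_cast hi)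

lemma exists_first_digit_ne {x y : FF K} (hx : x ∈ unitBall K) (hy : y ∈ unitBall K)
    (hxy : x ≠ y) : ∃ N, (∀ m < N, digit x m = digit y m) ∧ digit x N ≠ digit y N := by
  have hne : ∃ N, digit x N ≠ digit y N := by
    by_contra! heq
    refine hxy (sub_eq_zero.1 (toL_eq_zero.1 (HahnSeries.ext (funext fun i => ?_))))
    exact coeff_sub_eq_zero_of_digit_eq hx hy (N := i.toNat) (fun m _ => heq m) (by omega)
  exact ⟨Nat.find hne, fun m hm => not_not.1 (Nat.find_min hne hm), Nat.find_spec hne⟩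

lemma inv_pow_le_dist_of_digit_ne {x y : FF K} {N : ℕ} (h : digit x N ≠ digit y N) :
    ((Fintype.card K : ℝ) ^ (N + 1))⁻¹ ≤ dist x y := by
  rw [← zpow_natCast, ← zpow_neg]
  refine zpow_le_fnorm (x := x - y) ?_
  rw [toL_sub, HahnSeries.coeff_sub]
  exact sub_ne_zero.2 (by exact_mod_cast h)

lemma ofDigits_mem_unitBall (u : ℕ → K) : ofDigits u ∈ unitBall K := by
  refine mem_unitBall_iff.2 fun i hi => ?_
  refine (PowerSeries.coeff_coe (PowerSeries.X * PowerSeries.mk u) i).trans ?_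
  rcases hi.lt_or_eq with hi | rfl
  · exact if_pos hi
  · simp

end UnitBall

section PolynomialVectors

open Polynomial

variable {ι : Type*} [Fintype ι]

lemma inv_card_le_sdist {x : FF K} (hx : digit x 0 ≠ 0) :
    (Fintype.card K : ℝ)⁻¹ ≤ sdist x := by
  refine le_ciInf fun P => ?_
  rw [← zpow_neg_one]
  refine zpow_le_fnorm ?_
  rw [toL_sub, HahnSeries.coeff_sub, coeff_polyF, if_neg (by norm_num), sub_zero]
  exact_mod_cast hx

lemma pnorm_nonneg (v : ι → K[X]) : 0 ≤ pnorm v := Real.iSup_nonneg fun _ => fnorm_nonneg _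

lemma pnorm_zero : pnorm (0 : ι → K[X]) = 0 := by
  have hzero : fnorm (polyF (0 : K[X])) = 0 := fnorm_eq_zero.2 <|
    map_zero (aeval (HahnSeries.single (-1 : ℤ) (1 : K)))
  simp [pnorm, vnorm, hzero]

lemma pnorm_le_pow_vdegree (v : ι → K[X]) : pnorm v ≤ (Fintype.card K : ℝ) ^ vdegree v := by
  refine Real.iSup_le (fun i => ?_) (by positivity)
  rw [← zpow_natCast, ← neg_neg (vdegree v : ℤ)]
  refine fnorm_le_zpow fun j hj => ?_
  rw [coeff_polyF, if_pos (by omega)]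
  exact coeff_eq_zero_of_natDegree_lt ((natDegree_le_vdegree v i).trans_lt (by omega))

lemma pnorm_eq_pow_vdegree {v : ι → K[X]} (hv : v ≠ 0) :
    pnorm v = (Fintype.card K : ℝ) ^ vdegree v := by
  refine (pnorm_le_pow_vdegree v).antisymm ?_
  obtain ⟨i, hi⟩ := exists_coeff_vdegree_ne_zero hv
  refine le_ciSup_of_le (Set.finite_range _).bddAbove i ?_
  rw [← zpow_natCast, ← neg_neg (vdegree v : ℤ)]
  refine zpow_le_fnorm ?_
  rwa [coeff_polyF, if_pos (by omega), neg_neg, Int.toNat_natCast]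

lemma exists_digit_eq_and_inv_card_le_sdist {κ : Type*} {T : Set κ} {v : κ → ι → K[X]}
    (hv : ∀ k ∈ T, v k ≠ 0) (hinj : Set.InjOn (fun k => vdegree (v k)) T) (c : ℕ → ι → K) :
    ∃ θ : ι → FF K, (∀ i, θ i ∈ unitBall K) ∧
      (∀ k ∈ T, (Fintype.card K : ℝ)⁻¹ ≤ sdist (∑ i, polyF (v k i) * θ i)) ∧
      ∀ s ∉ (fun k => vdegree (v k)) '' T, ∀ i, digit (θ i) s = c s i := by
  have hlead : ∀ k ∈ T, (fun i => (v k i).coeff (vdegree (v k))) ≠ 0 := fun k hk =>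
    Function.ne_iff.2 (exists_coeff_vdegree_ne_zero (hv k hk))
  obtain ⟨u, hsolve, hfree⟩ := exists_triangular_solution
    (w := fun k m i => (v k i).coeff m) hinj hlead (fun _ => 1) c
  refine ⟨fun i => ofDigits fun m => u m i, fun i => ofDigits_mem_unitBall _, fun k hk => ?_,
    fun s hs i => (digit_ofDigits _ s).trans (congrFun (hfree s hs) i)⟩
  refine inv_card_le_sdist ?_
  simp only [digit_zero_sum_polyF_mul, digit_ofDigits]
  exact (hsolve k hk).trans_ne one_ne_zero

end PolynomialVectors

section Growth

open Polynomial

variable {ι : Type*} [Fintype ι] {h : ℕ → ι → K[X]}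

lemma eventually_mul_le_vdegree
    (hgrow : Tendsto (fun k : ℕ => pnorm (h k) ^ (1 / (k : ℝ))) atTop atTop) (M : ℕ) :
    ∀ᶠ k in atTop, M * k ≤ vdegree (h k) := by
  filter_upwards [eventually_pow_le_of_tendsto_rpow_one_div (fun k => pnorm_nonneg (h k)) hgrow
    (b := (Fintype.card K : ℝ) ^ M) (by positivity)] with k hk
  rw [← pow_le_pow_iff_right₀ (one_lt_card_real (K := K)), pow_mul]
  exact hk.trans (pnorm_le_pow_vdegree (h k))

lemma eventually_pnorm_pos
    (hgrow : Tendsto (fun k : ℕ => pnorm (h k) ^ (1 / (k : ℝ))) atTop atTop) :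
    ∀ᶠ k in atTop, 0 < pnorm (h k) := by
  filter_upwards [eventually_pow_le_of_tendsto_rpow_one_div (fun k => pnorm_nonneg (h k)) hgrow
    (b := 1) zero_le_one] with k hk
  exact zero_lt_one.trans_le (by simpa using hk)

lemma exists_injOn_pnorm {c : ℝ} (hc : 1 < c)
    (hratio : ∀ k, 1 ≤ k → c * pnorm (h k) ≤ pnorm (h (k + 1)))
    (hgrow : Tendsto (fun k : ℕ => pnorm (h k) ^ (1 / (k : ℝ))) atTop atTop) :
    ∃ k₀, Set.InjOn (fun k => pnorm (h k)) (Set.Ici k₀) := by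
  obtain ⟨k₀, hk₀⟩ := eventually_atTop.1 ((eventually_pnorm_pos hgrow).and (eventually_ge_atTop 1))
  exact ⟨k₀, (strictMonoOn_Ici_of_mul_le_succ hc (fun k hk => (hk₀ k hk).1)
    fun k hk => hratio k (hk₀ k hk).2).injOn⟩

lemma injOn_vdegree {κ : Type*} {T : Set κ} {v : κ → ι → K[X]} (hv : ∀ k ∈ T, v k ≠ 0)
    (hinj : Set.InjOn (fun k => pnorm (v k)) T) : Set.InjOn (fun k => vdegree (v k)) T :=
  fun k hk l hl (hkl : vdegree (v k) = vdegree (v l)) => hinj hk hl <| by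
    simp only [pnorm_eq_pow_vdegree (hv k hk), pnorm_eq_pow_vdegree (hv l hl), hkl]

end Growth

section Dimension

variable {ι : Type*} {S : Set (ι → FF K)}

/-- The real number whose base `q` digits are the digits of `x` at the positions satisfying `p`,
the elements of `𝔽_q` being numbered arbitrarily from `0` to `q - 1`. -/
def realOfDigitsAt (p : ℕ → Prop) (x : FF K) : ℝ :=
  Real.ofDigits fun j => Fintype.equivFin K (digit x (Nat.nth p j))

lemma holderOnWith_realOfDigitsAt {p : ℕ → Prop} [DecidablePred p] {r : ℝ≥0} {C : ℕ}
    (hp : ∀ N : ℕ, r * N ≤ Nat.count p N + (C : ℝ)) :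
    HolderOnWith ((Fintype.card K : ℝ≥0) ^ (C + r : ℝ)) r (realOfDigitsAt p) (unitBall K) := by
  refine holderOnWith_of_dist_le fun x hx y hy => ?_
  rcases eq_or_ne x y with rfl | hxy
  · rw [dist_self]
    positivity
  obtain ⟨N, hagree, hne⟩ := exists_first_digit_ne hx hy hxy
  have hexp : -(Nat.count p N : ℝ) ≤ C + r + -((N + 1 : ℕ) * r) := by
    push_cast
    linarith [hp N]
  set q : ℝ := (Fintype.card K : ℝ)
  have hq : 0 < q := one_pos.trans one_lt_card_real
  calc dist (realOfDigitsAt p x) (realOfDigitsAt p y)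
      ≤ (q ^ Nat.count p N)⁻¹ := Real.abs_ofDigits_sub_ofDigits_le fun j hj => by
        rw [hagree _ (Nat.nth_lt_of_lt_count hj)]
    _ = q ^ (-(Nat.count p N : ℝ)) := by rw [Real.rpow_neg hq.le, Real.rpow_natCast]
    _ ≤ q ^ (C + r + -((N + 1 : ℕ) * r) : ℝ) := Real.rpow_le_rpow_of_exponent_le one_le_q hexp
    _ = q ^ (C + r : ℝ) * (q ^ (N + 1))⁻¹ ^ (r : ℝ) := by
        rw [Real.rpow_add hq, Real.rpow_neg hq.le, Real.rpow_mul hq.le, Real.rpow_natCast,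
          Real.inv_rpow (by positivity)]
    _ ≤ q ^ (C + r : ℝ) * dist x y ^ (r : ℝ) := by
        gcongr
        exact inv_pow_le_dist_of_digit_ne hne
    _ = _ := by simp [q]

lemma Icc_subset_image_realOfDigitsAt {p : ℕ → Prop} (hinf : (Set.ofPred p).Infinite)
    (hfree : ∀ c : ℕ → ι → K, ∃ θ ∈ S, ∀ s, p s → ∀ i, digit (θ i) s = c s i) :
    Set.Icc (0 : ι → ℝ) 1 ⊆ (fun θ i => realOfDigitsAt p (θ i)) '' S := by
  intro y hy
  choose a _ ha using fun i =>
    Real.ofDigits_SurjOn (Fintype.one_lt_card (α := K)) ⟨hy.1 i, hy.2 i⟩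
  obtain ⟨θ, hθ, hdigit⟩ := hfree fun s i => (Fintype.equivFin K).symm (a i (Nat.count p s))
  refine ⟨θ, hθ, funext fun i => (congrArg Real.ofDigits (funext fun j => ?_)).trans (ha i)⟩
  rw [hdigit _ (Nat.nth_mem_of_infinite hinf j), Nat.count_nth_of_infinite hinf,
    Equiv.apply_symm_apply]

variable [Fintype ι]

lemma ediam_cylinder_le (N : ℕ) (c : ι → Fin N → K) :
    Metric.ediam {θ : ι → FF K | (∀ i, θ i ∈ unitBall K) ∧ ∀ i (m : Fin N), digit (θ i) m = c i m} ≤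
      ((Fintype.card K : ℝ≥0∞) ^ N)⁻¹ := by
  refine Metric.ediam_le fun θ hθ θ' hθ' => edist_pi_le_iff.2 fun i => ?_
  have hdist : dist (θ i) (θ' i) ≤ ((Fintype.card K : ℝ) ^ N)⁻¹ :=
    (dist_le_of_digit_eq (hθ.1 i) (hθ'.1 i) fun m hm =>
      (hθ.2 i ⟨m, hm⟩).trans (hθ'.2 i ⟨m, hm⟩).symm).trans <| by
        gcongr
        exacts [one_le_q, N.le_succ]
  rw [edist_dist]
  refine (ENNReal.ofReal_le_ofReal hdist).trans_eq ?_
  rw [ENNReal.ofReal_inv_of_pos (by positivity), ENNReal.ofReal_pow (by positivity),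
    ENNReal.ofReal_natCast]

theorem dimH_le_card_of_forall_mem_unitBall (hS : ∀ θ ∈ S, ∀ i, θ i ∈ unitBall K) :
    dimH S ≤ Fintype.card ι := by
  have hscale : Tendsto (fun N : ℕ => ((Fintype.card K : ℝ≥0∞) ^ N)⁻¹) atTop (nhds 0) := by
    simp only [ENNReal.inv_pow]
    exact ENNReal.tendsto_pow_atTop_nhds_zero_of_lt_one
      (ENNReal.inv_lt_one.2 (by exact_mod_cast Fintype.one_lt_card))
  have hcard : ∀ N : ℕ, (Fintype.card (ι → Fin N → K) : ℝ≥0∞) *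
      ((Fintype.card K : ℝ≥0∞) ^ N)⁻¹ ^ ((Fintype.card ι : ℝ≥0) : ℝ) ≤ (1 : ℝ≥0) := fun N => by
    have hpow : (Fintype.card (ι → Fin N → K) : ℝ≥0∞) =
        ((Fintype.card K : ℝ≥0∞) ^ N) ^ Fintype.card ι := by simp
    rw [hpow, NNReal.coe_natCast, ENNReal.rpow_natCast, ← ENNReal.inv_pow, ENNReal.coe_one]
    exact ENNReal.mul_inv_le_one _
  have hcover : ∀ N, S ⊆ ⋃ c : ι → Fin N → K,
      {θ | (∀ i, θ i ∈ unitBall K) ∧ ∀ i (m : Fin N), digit (θ i) m = c i m} := fun N θ hθ =>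
    Set.mem_iUnion.2 ⟨fun i m => digit (θ i) m, hS θ hθ, fun _ _ => rfl⟩
  have hdim : dimH S ≤ ((Fintype.card ι : ℝ≥0) : ℝ≥0∞) :=
    dimH_le_of_forall_cover (ι := fun N => ι → Fin N → K) (C := 1) hscale ediam_cylinder_le
      hcover hcard
  exact hdim.trans_eq (ENNReal.coe_natCast _)

lemma mul_card_le_dimH_of_mul_le_count (hS : ∀ θ ∈ S, ∀ i, θ i ∈ unitBall K) {p : ℕ → Prop}
    [DecidablePred p] {r : ℝ≥0} (hr : 0 < r) {C : ℕ} (hp : ∀ N : ℕ, r * N ≤ Nat.count p N + (C : ℝ))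
    (hfree : ∀ c : ℕ → ι → K, ∃ θ ∈ S, ∀ s, p s → ∀ i, digit (θ i) s = c s i) :
    r * Fintype.card ι ≤ dimH S := by
  have hinf := infinite_of_mul_le_count (NNReal.coe_pos.2 hr) hp
  have hholder : HolderOnWith ((Fintype.card K : ℝ≥0) ^ (C + r : ℝ)) r
      (fun θ i => realOfDigitsAt p (θ i)) S := fun θ hθ θ' hθ' => edist_pi_le_iff.2 fun i =>
    (holderOnWith_realOfDigitsAt hp).edist_le_of_le (hS θ hθ i) (hS θ' hθ' i)
      (edist_le_pi_edist θ θ' i)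
  have hcube : (Fintype.card ι : ℝ≥0∞) ≤ dimH S / r :=
    calc (Fintype.card ι : ℝ≥0∞) = dimH (Set.Icc (0 : ι → ℝ) 1) :=
          (dimH_Icc_pi ι fun _ => one_pos).symm
      _ ≤ dimH ((fun θ i => realOfDigitsAt p (θ i)) '' S) :=
          dimH_mono (Icc_subset_image_realOfDigitsAt hinf hfree)
      _ ≤ dimH S / r := hholder.dimH_image_le hr
  rw [mul_comm]
  exact ENNReal.mul_le_of_le_div hcube

theorem card_le_dimH_of_forall_exists_mul_le_count (hS : ∀ θ ∈ S, ∀ i, θ i ∈ unitBall K)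
    {p : ℕ → Prop} [DecidablePred p]
    (hp : ∀ r : ℝ, r < 1 → ∃ C : ℕ, ∀ N : ℕ, r * N ≤ Nat.count p N + C)
    (hfree : ∀ c : ℕ → ι → K, ∃ θ ∈ S, ∀ s, p s → ∀ i, digit (θ i) s = c s i) :
    Fintype.card ι ≤ dimH S := by
  refine ENNReal.le_of_forall_lt_one_mul_le fun r hr => ?_
  lift r to ℝ≥0 using hr.ne_top
  rcases eq_zero_or_pos r with rfl | hr0
  · simp
  obtain ⟨C, hC⟩ := hp r (by exact_mod_cast hr)
  exact mul_card_le_dimH_of_mul_le_count hS hr0 hC hfree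

end Dimension

end FPSDA

theorem dimH_avoid_full_general {K : Type*} [Field K] [Fintype K] {ι : Type*} [Fintype ι]
    {δ : ℝ} (hδ : δ ≤ (Fintype.card K : ℝ)⁻¹) {h : ℕ → ι → Polynomial K}
    (hinj : ∃ k₀, Set.InjOn (fun k => pnorm (h k)) (Set.Ici k₀))
    (hgrow : Tendsto (fun k : ℕ => pnorm (h k) ^ (1 / (k : ℝ))) atTop atTop) :
    dimH {θ : ι → FF K | (∀ i, fnorm (θ i) < 1) ∧
      ∃ k₀, ∀ k, k₀ ≤ k → δ ≤ sdist (∑ i, polyF (h k i) * θ i)} = Fintype.card ι := by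
  obtain ⟨k₁, hk₁⟩ := hinj
  obtain ⟨k₂, hk₂⟩ := eventually_atTop.1 (eventually_pnorm_pos hgrow)
  let T := Set.Ici (max k₁ k₂)
  have hne : ∀ k ∈ T, h k ≠ 0 := fun k hk h0 =>
    (hk₂ k (le_of_max_le_right hk)).ne' (h0 ▸ pnorm_zero)
  have hdeg : Set.InjOn (fun k => vdegree (h k)) T :=
    injOn_vdegree hne (hk₁.mono (Set.Ici_subset_Ici.2 (le_max_left k₁ k₂)))
  refine (dimH_le_card_of_forall_mem_unitBall fun θ hθ => hθ.1).antisymm <|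
    card_le_dimH_of_forall_exists_mul_le_count (fun θ hθ => hθ.1)
      (fun r hr => exists_mul_le_count_notMem_image (eventually_mul_le_vdegree hgrow) T hr)
      fun c => ?_
  obtain ⟨θ, hball, hdist, hfree⟩ := exists_digit_eq_and_inv_card_le_sdist hne hdeg c
  exact ⟨θ, ⟨hball, max k₁ k₂, fun k hk => hδ.trans (hdist k hk)⟩, hfree⟩

/-- (Lemma 7.1 of the paper.) For `δ ∈ (0, q⁻¹]`, if `(h_k)_{k ≥ 1}` is a sequence of
polynomial vectors with `‖h_{k+1}‖ / ‖h_k‖ ≥ q δ⁻¹` and `‖h_k‖^{1/k} → ∞`, then the set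
of `θ ∈ 𝕀ⁿ` with `⟨h_k ⋅ θ⟩ ≥ δ` for all sufficiently large `k` has Hausdorff
dimension `n`. -/
theorem dimH_avoid_full {K : Type*} [Field K] [Fintype K] {n : ℕ} (hn : 0 < n)
    (δ : ℝ) (hδ0 : 0 < δ) (hδ : δ ≤ (Fintype.card K : ℝ)⁻¹)
    (h : ℕ → Fin n → Polynomial K)
    (hratio : ∀ k, 1 ≤ k →
      (Fintype.card K : ℝ) * δ⁻¹ * pnorm (h k) ≤ pnorm (h (k + 1)))
    (hgrow : Filter.Tendsto (fun k : ℕ => pnorm (h k) ^ (1 / (k : ℝ)))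
      Filter.atTop Filter.atTop) :
    dimH {θ : Fin n → FF K | (∀ i, fnorm (θ i) < 1) ∧
      ∃ k₀, ∀ k, k₀ ≤ k → δ ≤ sdist (∑ i, polyF (h k i) * θ i)} = n := by
  have hq : 1 ≤ δ⁻¹ := one_le_q.trans ((le_inv_comm₀ hδ0 (by positivity)).1 hδ)
  have hc : 1 < (Fintype.card K : ℝ) * δ⁻¹ := one_lt_mul_of_lt_of_le one_lt_card_real hq
  simpa using dimH_avoid_full_general hδ (exists_injOn_pnorm hc hratio hgrow) hgrow
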